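/- arXiv:1511.05906 — 2 statements merged into one kernel-verified Lean document; each statement's English description precedes it below -/
import Mathlib

section
/- Let T : [0,1] → [0,1] be a Markov interval map satisfying hypotheses (A1)–(A4). Then T is exact with respect to Lebesgue measure: every Borel set A in the tail σ-algebra 𝒯 := ⋂_{n≥0} T^{-n}(Borel σ-algebra of [0,1]) satisfies Leb(A) = 0 or Leb([0,1] \ A) = 0. -/
open MeasureTheory Set Filter

/-- An interval map `T : [0,1] → [0,1]` which is Markov with respect to the
partition `{[a_j, a_{j+1}]}` given by the strictly increasing sequence
`0 = a_0 < a_1 < ⋯` with supremum `1`, satisfying hypotheses (A1)–(A4).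
The branch extensions are `φ j`, with first and second derivatives
`φd j` and `φdd j` (taken within `[a_j, a_{j+1}]`). -/
structure IntervalMapSetup where
  T : ℝ → ℝ
  a : ℕ → ℝ
  φ : ℕ → ℝ → ℝ
  φd : ℕ → ℝ → ℝ
  φdd : ℕ → ℝ → ℝ
  Λ : ℝ
  K : ℝ
  β : ℝ
  c₁ : ℝ
  c₂ : ℝ
  ha0 : a 0 = 0
  ha_mono : StrictMono a
  ha_lt : ∀ j, a j < 1
  ha_lim : Tendsto a atTop (nhds 1)
  hT_maps : MapsTo T (Icc 0 1) (Icc 0 1)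
  -- `T` coincides with the branch `φ j` on the open interval `(a_j, a_{j+1})`
  hT_eq : ∀ j, ∀ x ∈ Ioo (a j) (a (j+1)), T x = φ j x
  -- (A1): each branch is a bijection onto `[0,1]`, `C²` up to the boundary
  hφ_bij : ∀ j, BijOn (φ j) (Icc (a j) (a (j+1))) (Icc 0 1)
  hφ_d : ∀ j, ∀ x ∈ Icc (a j) (a (j+1)),
    HasDerivWithinAt (φ j) (φd j x) (Icc (a j) (a (j+1))) x
  hφ_dd : ∀ j, ∀ x ∈ Icc (a j) (a (j+1)),
    HasDerivWithinAt (φd j) (φdd j x) (Icc (a j) (a (j+1))) x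
  hφdd_cont : ∀ j, ContinuousOn (φdd j) (Icc (a j) (a (j+1)))
  -- (A2): uniform expansion on branches `j ≥ 1`
  hΛ : 1 < Λ
  hA2 : ∀ j, 1 ≤ j → ∀ x ∈ Icc (a j) (a (j+1)), Λ ≤ |φd j x|
  -- (A3): distortion bound
  hK : 0 < K
  hA3 : ∀ j, ∀ x ∈ Icc (a j) (a (j+1)), |φdd j x| / (φd j x) ^ 2 ≤ K
  -- (A4): indifferent fixed point at 0
  hβ : 0 ≤ β
  hc₁ : 0 < c₁
  hc₁₂ : c₁ < c₂
  hA4_conv : ConvexOn ℝ (Icc (a 0) (a 1)) (φ 0)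
  hA4_fix : φ 0 0 = 0
  hA4_d1 : φd 0 0 = 1
  hA4_exp : ∀ x : ℝ, 0 < x → x ≤ a 1 → 1 < φd 0 x
  hA4_dd : ∀ x ∈ Ioo (0:ℝ) (a 1), c₁ * x ^ β ≤ φdd 0 x ∧ φdd 0 x ≤ c₂ * x ^ β

/-!
Cut the orbit of a point at its visits to the branches other than the first one. The inverse branch
of such a first passage is `ψ₀^l ∘ ψᵢ` with `i ≠ 0`. It contracts by a factor `ρ < 1`, and its
distortion is bounded uniformly in `l` because the images under `ψ₀^l` of the fundamental domain
`[ψ₀ 1, 1]` do not overlap. Composing first passages, almost every point lies in arbitrarily small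
cylinders which an iterate of `T` maps onto `[0, 1]` with uniformly bounded distortion.

Let `A = T⁻ⁿ (B n)` for all `n`. If `A` is not null, blowing up small cylinders around a density
point of `A` shows that some `B n` is nearly full. The same applies to the sets
`B (k + n) \ B (k + 1 + n)`: if `B k \ B (k + 1)` is not null, then one of them is nearly full. But
if `B (k + n)` is nearly full then so is `B (k + n + 1)`, a contradiction. Passing to complements,
consecutive `B n` agree almost everywhere, and `A = B 0` is as full as any `B n`.
-/

open scoped NNReal ENNReal Topology

section MeanValue

theorem exists_sub_eq_mul_sub_of_hasDerivWithinAt {f f' : ℝ → ℝ} {s : Set ℝ} {x y : ℝ}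
    (hs : Convex ℝ s) (hf : ∀ z ∈ s, HasDerivWithinAt f (f' z) s z) (hx : x ∈ s) (hy : y ∈ s) :
    ∃ ξ ∈ s, f x - f y = f' ξ * (x - y) := by
  obtain ⟨ξ, hξ, h⟩ := domain_mvt (fun z hz => (hf z hz).hasFDerivWithinAt) hs hy hx
  exact ⟨ξ, hs.segment_subset hy hx hξ, by simpa [mul_comm] using h⟩

theorem abs_sub_mul_abs_sub_le_of_abs_deriv_le {f f' : ℝ → ℝ} {s : Set ℝ} {C x y u v : ℝ}
    (hs : Convex ℝ s) (hf : ∀ z ∈ s, HasDerivWithinAt f (f' z) s z)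
    (hf' : ∀ z ∈ s, ∀ w ∈ s, |f' z| ≤ C * |f' w|)
    (hx : x ∈ s) (hy : y ∈ s) (hu : u ∈ s) (hv : v ∈ s) :
    |f x - f y| * |u - v| ≤ C * (|f u - f v| * |x - y|) := by
  obtain ⟨ξ, hξ, hxy⟩ := exists_sub_eq_mul_sub_of_hasDerivWithinAt hs hf hx hy
  obtain ⟨η, hη, huv⟩ := exists_sub_eq_mul_sub_of_hasDerivWithinAt hs hf hu hv
  calc |f x - f y| * |u - v| = |f' ξ| * (|x - y| * |u - v|) := by rw [hxy, abs_mul]; ring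
    _ ≤ C * |f' η| * (|x - y| * |u - v|) := by gcongr; exact hf' ξ hξ η hη
    _ = C * (|f u - f v| * |x - y|) := by rw [huv, abs_mul]; ring

end MeanValue

section Distortion

/-- `g` is differentiable on `s` and `log |g'|` is `κ`-Lipschitz there: the bounded distortion
property of one-dimensional dynamics. The bound is written multiplicatively, so that zeros of the
derivative need not be excluded. -/
def HasDistortionOn (κ : ℝ≥0) (g : ℝ → ℝ) (s : Set ℝ) : Prop :=
  ∃ g' : ℝ → ℝ, (∀ x ∈ s, HasDerivWithinAt g (g' x) s x) ∧
    ∀ x ∈ s, ∀ y ∈ s, |g' x| ≤ Real.exp (κ * |x - y|) * |g' y|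

namespace HasDistortionOn

variable {κ κ' r : ℝ≥0} {f g h : ℝ → ℝ} {s t : Set ℝ}

theorem id : HasDistortionOn κ id s :=
  ⟨fun _ => 1, fun x _ => hasDerivWithinAt_id x s, fun x _ y _ =>
    le_mul_of_one_le_left (abs_nonneg _) (Real.one_le_exp (by positivity))⟩

theorem comp (hg : HasDistortionOn κ g t) (hh : HasDistortionOn κ' h s) (hst : MapsTo h s t)
    (hr : LipschitzOnWith r h s) : HasDistortionOn (κ * r + κ') (g ∘ h) s := by
  obtain ⟨g', hg', hgκ⟩ := hg
  obtain ⟨h', hh', hhκ⟩ := hh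
  refine ⟨fun x => g' (h x) * h' x, fun x hx => (hg' _ (hst hx)).comp x (hh' x hx) hst,
    fun x hx y hy => ?_⟩
  have hxy : |h x - h y| ≤ r * |x - y| := hr.dist_le_mul x hx y hy
  calc |g' (h x) * h' x|
      ≤ (Real.exp (κ * |h x - h y|) * |g' (h y)|) * (Real.exp (κ' * |x - y|) * |h' y|) := by
        rw [abs_mul]
        gcongr
        exacts [hgκ _ (hst hx) _ (hst hy), hhκ x hx y hy]
    _ ≤ (Real.exp (κ * (r * |x - y|)) * |g' (h y)|) * (Real.exp (κ' * |x - y|) * |h' y|) := by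
        gcongr
    _ = Real.exp ((κ * r + κ' : ℝ≥0) * |x - y|) * |g' (h y) * h' y| := by
        rw [abs_mul, NNReal.coe_add, NNReal.coe_mul, add_mul, mul_assoc (κ : ℝ), Real.exp_add]
        ring

theorem differentiableOn (hg : HasDistortionOn κ g s) : DifferentiableOn ℝ g s :=
  let ⟨_, hg', _⟩ := hg
  fun x hx => (hg' x hx).differentiableWithinAt

theorem abs_sub_mul_abs_sub_le {d x y u v : ℝ} (hg : HasDistortionOn κ g s) (hs : Convex ℝ s)
    (hd : ∀ x ∈ s, ∀ y ∈ s, |x - y| ≤ d) (hx : x ∈ s) (hy : y ∈ s) (hu : u ∈ s) (hv : v ∈ s) :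
    |g x - g y| * |u - v| ≤ Real.exp (κ * d) * (|g u - g v| * |x - y|) := by
  obtain ⟨g', hg', hκ⟩ := hg
  refine abs_sub_mul_abs_sub_le_of_abs_deriv_le hs hg' (fun z hz w hw => ?_) hx hy hu hv
  refine (hκ z hz w hw).trans ?_
  gcongr
  exact hd z hz w hw

theorem abs_sub_le_mul {x y : ℝ} (hg : HasDistortionOn κ g (Icc 0 1)) (hx : x ∈ Icc (0 : ℝ) 1)
    (hy : y ∈ Icc (0 : ℝ) 1) : |g x - g y| ≤ Real.exp κ * |g 0 - g 1| * |x - y| := by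
  simpa [mul_assoc] using hg.abs_sub_mul_abs_sub_le (convex_Icc 0 1)
    (fun x hx y hy => Real.dist_le_of_mem_Icc_01 hx hy) hx hy
    unitInterval.zero_mem unitInterval.one_mem

theorem mul_abs_sub_le {x y : ℝ} (hg : HasDistortionOn κ g (Icc 0 1)) (hx : x ∈ Icc (0 : ℝ) 1)
    (hy : y ∈ Icc (0 : ℝ) 1) : |g 0 - g 1| * |x - y| ≤ Real.exp κ * |g x - g y| := by
  simpa using hg.abs_sub_mul_abs_sub_le (convex_Icc 0 1)
    (fun x hx y hy => Real.dist_le_of_mem_Icc_01 hx hy)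
    unitInterval.zero_mem unitInterval.one_mem hx hy

theorem exists_abs_sub_le_mul (hg : HasDistortionOn κ g (Icc 0 1)) (h : g 0 ≠ g 1) :
    ∃ C : ℝ≥0, ∀ x ∈ Icc (0 : ℝ) 1, ∀ y ∈ Icc (0 : ℝ) 1, |x - y| ≤ C * |g x - g y| := by
  refine ⟨(Real.exp κ / |g 0 - g 1|).toNNReal, fun x hx y hy => ?_⟩
  rw [Real.coe_toNNReal _ (by positivity), div_mul_eq_mul_div,
    le_div_iff₀' (abs_pos.2 (sub_ne_zero.2 h))]
  exact hg.mul_abs_sub_le hx hy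

theorem exists_deriv_iterate (hf : HasDistortionOn κ f s) (hs : MapsTo f s s) (n : ℕ) :
    ∃ g' : ℝ → ℝ, (∀ x ∈ s, HasDerivWithinAt f^[n] (g' x) s x) ∧ ∀ x ∈ s, ∀ y ∈ s,
      |g' x| ≤ Real.exp (κ * ∑ k ∈ Finset.range n, |f^[k] x - f^[k] y|) * |g' y| := by
  obtain ⟨f', hf', hκ⟩ := hf
  induction n with
  | zero => exact ⟨fun _ => 1, fun x _ => hasDerivWithinAt_id x s, by simp⟩
  | succ n ih =>
    obtain ⟨g', hg', hn⟩ := ih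
    have hsn : MapsTo f^[n] s s := hs.iterate n
    refine ⟨fun x => f' (f^[n] x) * g' x, fun x hx => ?_, fun x hx y hy => ?_⟩
    · rw [Function.iterate_succ']
      exact (hf' _ (hsn hx)).comp x (hg' x hx) hsn
    · rw [abs_mul, abs_mul, Finset.sum_range_succ, mul_add, Real.exp_add]
      calc |f' (f^[n] x)| * |g' x|
          ≤ (Real.exp (κ * |f^[n] x - f^[n] y|) * |f' (f^[n] y)|) *
            (Real.exp (κ * ∑ k ∈ Finset.range n, |f^[k] x - f^[k] y|) * |g' y|) := by
              gcongr
              exacts [hκ _ (hsn hx) _ (hsn hy), hn x hx y hy]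
        _ = _ := by ring

end HasDistortionOn

end Distortion

section MonotoneIterates

variable {f : ℝ → ℝ} {a b : ℝ} {κ : ℝ≥0}

theorem monotoneOn_iterate {s : Set ℝ} (hf : MonotoneOn f s) (hs : MapsTo f s s) (n : ℕ) :
    MonotoneOn f^[n] s := by
  induction n with
  | zero => exact monotoneOn_id
  | succ n ih => exact ih.comp hf hs

theorem mapsTo_iterate_Icc (hf : MonotoneOn f (Icc a b)) (hs : MapsTo f (Icc a b) (Icc a b))
    (hab : a ≤ b) (n : ℕ) : MapsTo f^[n] (Icc (f b) b) (Icc (f^[n + 1] b) (f^[n] b)) := by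
  intro x hx
  have hb : b ∈ Icc a b := right_mem_Icc.2 hab
  have hxab : x ∈ Icc a b := ⟨(hs hb).1.trans hx.1, hx.2⟩
  have hn := monotoneOn_iterate hf hs n
  exact ⟨hn (hs hb) hxab hx.1, hn hxab hb hx.2⟩

theorem sum_abs_iterate_sub_le (hf : MonotoneOn f (Icc a b)) (hs : MapsTo f (Icc a b) (Icc a b))
    (hab : a ≤ b) (n : ℕ) {x y : ℝ} (hx : x ∈ Icc (f b) b) (hy : y ∈ Icc (f b) b) :
    ∑ k ∈ Finset.range n, |f^[k] x - f^[k] y| ≤ b - a :=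
  calc ∑ k ∈ Finset.range n, |f^[k] x - f^[k] y|
      ≤ ∑ k ∈ Finset.range n, (f^[k] b - f^[k + 1] b) :=
        Finset.sum_le_sum fun k _ => Real.dist_le_of_mem_Icc
          (mapsTo_iterate_Icc hf hs hab k hx) (mapsTo_iterate_Icc hf hs hab k hy)
    _ = b - f^[n] b := Finset.sum_range_sub' (fun k => f^[k] b) n
    _ ≤ b - a := sub_le_sub_left (hs.iterate n (right_mem_Icc.2 hab)).1 _

theorem HasDistortionOn.abs_iterate_sub_mul_le (hd : HasDistortionOn κ f (Icc a b))
    (hf : MonotoneOn f (Icc a b)) (hs : MapsTo f (Icc a b) (Icc a b)) (hab : a ≤ b) (n : ℕ)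
    {x y u v : ℝ} (hx : x ∈ Icc (f b) b) (hy : y ∈ Icc (f b) b) (hu : u ∈ Icc (f b) b)
    (hv : v ∈ Icc (f b) b) :
    |f^[n] x - f^[n] y| * |u - v| ≤
      Real.exp (κ * (b - a)) * (|f^[n] u - f^[n] v| * |x - y|) := by
  have hsub : Icc (f b) b ⊆ Icc a b := Icc_subset_Icc_left (hs (right_mem_Icc.2 hab)).1
  obtain ⟨g', hg', hκ⟩ := hd.exists_deriv_iterate hs n
  refine abs_sub_mul_abs_sub_le_of_abs_deriv_le (convex_Icc _ _)
    (fun z hz => (hg' z (hsub hz)).mono hsub) (fun z hz w hw => ?_) hx hy hu hv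
  refine (hκ z (hsub hz) w (hsub hw)).trans ?_
  gcongr
  exact sum_abs_iterate_sub_le hf hs hab n hz hw

/- The images of the fundamental domain `[f b, b]` do not overlap, so `sum_abs_iterate_sub_le`
bounds the distortion uniformly; feeding this back into the sum makes the bound Lipschitz. -/
theorem HasDistortionOn.sum_abs_iterate_sub_le_mul (hd : HasDistortionOn κ f (Icc a b))
    (hf : MonotoneOn f (Icc a b)) (hs : MapsTo f (Icc a b) (Icc a b)) (hab : a ≤ b)
    (hb : f b < b) (n : ℕ) {x y : ℝ} (hx : x ∈ Icc (f b) b) (hy : y ∈ Icc (f b) b) :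
    ∑ k ∈ Finset.range n, |f^[k] x - f^[k] y| ≤
      Real.exp (κ * (b - a)) * (b - a) / (b - f b) * |x - y| := by
  have hbmem : b ∈ Icc (f b) b := right_mem_Icc.2 hb.le
  have hfbmem : f b ∈ Icc (f b) b := left_mem_Icc.2 hb.le
  rw [div_mul_eq_mul_div, le_div_iff₀ (sub_pos.2 hb), ← abs_of_pos (sub_pos.2 hb), Finset.sum_mul]
  calc ∑ k ∈ Finset.range n, |f^[k] x - f^[k] y| * |b - f b|
      ≤ ∑ k ∈ Finset.range n, Real.exp (κ * (b - a)) * (|f^[k] b - f^[k] (f b)| * |x - y|) :=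
        Finset.sum_le_sum fun k _ =>
          hd.abs_iterate_sub_mul_le hf hs hab k hx hy hbmem hfbmem
    _ = Real.exp (κ * (b - a)) * (∑ k ∈ Finset.range n, |f^[k] b - f^[k] (f b)|) * |x - y| := by
        rw [← Finset.mul_sum, ← Finset.sum_mul, mul_assoc]
    _ ≤ Real.exp (κ * (b - a)) * (b - a) * |x - y| := by
        gcongr
        exact sum_abs_iterate_sub_le hf hs hab n hbmem hfbmem

theorem HasDistortionOn.exists_forall_iterate (hd : HasDistortionOn κ f (Icc a b))
    (hf : MonotoneOn f (Icc a b)) (hs : MapsTo f (Icc a b) (Icc a b)) (hab : a ≤ b)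
    (hb : f b < b) : ∃ κ' : ℝ≥0, ∀ n, HasDistortionOn κ' f^[n] (Icc (f b) b) := by
  have hsub : Icc (f b) b ⊆ Icc a b := Icc_subset_Icc_left (hs (right_mem_Icc.2 hab)).1
  refine ⟨κ * (Real.exp (κ * (b - a)) * (b - a) / (b - f b)).toNNReal, fun n => ?_⟩
  obtain ⟨g', hg', hκ⟩ := hd.exists_deriv_iterate hs n
  refine ⟨g', fun x hx => (hg' x (hsub hx)).mono hsub, fun x hx y hy => ?_⟩
  refine (hκ x (hsub hx) y (hsub hy)).trans ?_
  rw [NNReal.coe_mul, mul_assoc (κ : ℝ)]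
  gcongr
  exact (hd.sum_abs_iterate_sub_le_mul hf hs hab hb n hx hy).trans
    (mul_le_mul_of_nonneg_right (Real.le_coe_toNNReal _) (abs_nonneg _))

theorem iterate_eq_of_apply_succ_eq {α : Type*} {f : α → α} {z : ℕ → α} {n : ℕ}
    (h : ∀ k < n, f (z (k + 1)) = z k) : f^[n] (z n) = z 0 := by
  induction n with
  | zero => rfl
  | succ n ih =>
    rw [Function.iterate_succ_apply, h n n.lt_succ_self]
    exact ih fun k hk => h k (hk.trans n.lt_succ_self)

theorem exists_apply_ne_of_apply_lt {z : ℕ → ℝ} (hf : ContinuousOn f (Ioc a b))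
    (hlt : ∀ y ∈ Ioc a b, f y < y) (hz : ∀ k, z k ∈ Ioc a b) : ∃ k, f (z (k + 1)) ≠ z k := by
  by_contra! h
  have hmono : Monotone z :=
    monotone_nat_of_le_succ fun k => (h k).symm.le.trans (hlt _ (hz (k + 1))).le
  have hbdd : BddAbove (range z) := ⟨b, forall_mem_range.2 fun k => (hz k).2⟩
  set l := ⨆ k, z k
  have hl : Tendsto z atTop (𝓝 l) := tendsto_atTop_ciSup hmono hbdd
  have hlmem : l ∈ Ioc a b :=
    ⟨(hz 0).1.trans_le (le_ciSup hbdd 0), ciSup_le fun k => (hz k).2⟩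
  have hfl : Tendsto (fun k => f (z (k + 1))) atTop (𝓝 (f l)) :=
    (hf l hlmem).tendsto.comp <| tendsto_nhdsWithin_iff.2
      ⟨hl.comp (tendsto_add_atTop_nat 1), .of_forall fun k => hz (k + 1)⟩
  exact (hlt l hlmem).ne (tendsto_nhds_unique (hfl.congr h) hl)

end MonotoneIterates

section Measure

theorem volume_le_mul_volume_image {g : ℝ → ℝ} {s : Set ℝ} {C : ℝ≥0}
    (hg : ∀ x ∈ s, ∀ y ∈ s, |x - y| ≤ C * |g x - g y|) : volume s ≤ C * volume (g '' s) := by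
  have hanti : AntilipschitzWith C (g ∘ ((↑) : s → ℝ)) :=
    .of_le_mul_dist fun x y => hg x x.2 y y.2
  have h := hanti.le_hausdorffMeasure_image zero_le_one univ
  rwa [← isometry_subtype_coe.hausdorffMeasure_image (Or.inl zero_le_one), image_comp, image_univ,
    Subtype.range_coe, hausdorffMeasure_real, ENNReal.rpow_one] at h

theorem volume_diff_preimage_le {g : ℝ → ℝ} {E s : Set ℝ} {x L : ℝ} {C : ℝ≥0}
    (hE : MeasurableSet E) (hL : 0 < L) (hmaps : MapsTo g s (Metric.closedBall x L))
    (hg : ∀ y ∈ s, ∀ z ∈ s, L * |y - z| ≤ C * |g y - g z|) :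
    volume (s \ g ⁻¹' E) ≤ 2 * C *
      (1 - volume (E ∩ Metric.closedBall x L) / volume (Metric.closedBall x L)) := by
  set ball := Metric.closedBall x L
  have hball : volume ball = 2 * ENNReal.ofReal L := by
    rw [Real.volume_closedBall, ENNReal.ofReal_mul zero_le_two, ENNReal.ofReal_ofNat]
  have hball0 : volume ball ≠ 0 := by simp [hball, hL]
  have hballtop : volume ball ≠ ∞ := by rw [hball]; finiteness
  calc volume (s \ g ⁻¹' E)
      ≤ ↑(C / L.toNNReal) * volume (g '' (s \ g ⁻¹' E)) := by
        refine volume_le_mul_volume_image fun y hy z hz => ?_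
        rw [NNReal.coe_div, Real.coe_toNNReal _ hL.le, div_mul_eq_mul_div, le_div_iff₀' hL]
        exact hg y hy.1 z hz.1
    _ ≤ ↑(C / L.toNNReal) * volume (ball \ E) := by
        gcongr
        exact image_subset_iff.2 fun y hy => ⟨hmaps hy.1, hy.2⟩
    _ = 2 * C * (volume (ball \ E) / volume ball) := by
        rw [ENNReal.coe_div (by simpa using hL), hball, mul_assoc, ← mul_div_assoc,
          ← mul_div_assoc, ENNReal.mul_div_mul_left _ _ (by simp) (by simp)]
        exact ENNReal.mul_div_right_comm.symm
    _ = 2 * C * (1 - volume (E ∩ ball) / volume ball) := by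
        rw [← ENNReal.div_self hball0 hballtop, ← ENNReal.sub_div fun _ _ => hball0,
          ← sdiff_inter_self_eq_sdiff, measure_sdiff inter_subset_right
            (hE.inter measurableSet_closedBall).nullMeasurableSet (by finiteness)]

theorem tendsto_volume_diff_preimage_zero {E s : Set ℝ} {x : ℝ} {g : ℕ → ℝ → ℝ} {L : ℕ → ℝ}
    {C : ℝ≥0} (hE : MeasurableSet E)
    (hx : Tendsto (fun δ => volume (E ∩ Metric.closedBall x δ) / volume (Metric.closedBall x δ))
      (𝓝[>] 0) (𝓝 1))
    (hL : ∀ n, 0 < L n) (hL0 : Tendsto L atTop (𝓝 0))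
    (hmaps : ∀ n, MapsTo (g n) s (Metric.closedBall x (L n)))
    (hg : ∀ n, ∀ y ∈ s, ∀ z ∈ s, L n * |y - z| ≤ C * |g n y - g n z|) :
    Tendsto (fun n => volume (s \ g n ⁻¹' E)) atTop (𝓝 0) := by
  have hL0' : Tendsto L atTop (𝓝[>] 0) := tendsto_nhdsWithin_iff.2 ⟨hL0, .of_forall hL⟩
  have hdens : Tendsto (fun n => 2 * C * (1 - volume (E ∩ Metric.closedBall x (L n)) /
      volume (Metric.closedBall x (L n)))) atTop (𝓝 0) := by
    simpa using ENNReal.Tendsto.const_mul (a := 2 * (C : ℝ≥0∞))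
      (ENNReal.Tendsto.sub tendsto_const_nhds (hx.comp hL0') (Or.inl ENNReal.one_ne_top))
      (Or.inr (by finiteness))
  exact tendsto_of_tendsto_of_tendsto_of_le_of_le tendsto_const_nhds hdens
    (fun _ => zero_le) fun n => volume_diff_preimage_le hE (hL n) (hmaps n) (hg n)

end Measure

section InverseFunctions

variable {f f' f'' g : ℝ → ℝ} {s t : Set ℝ}

theorem lipschitzOnWith_of_rightInvOn {L : ℝ≥0} (hs : Convex ℝ s) (hL : L ≠ 0)
    (hf : ∀ x ∈ s, HasDerivWithinAt f (f' x) s x) (hf' : ∀ x ∈ s, L ≤ |f' x|)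
    (hg : MapsTo g t s) (hfg : RightInvOn g f t) : LipschitzOnWith L⁻¹ g t := by
  refine .of_dist_le_mul fun y hy z hz => ?_
  obtain ⟨ξ, hξ, h⟩ := exists_sub_eq_mul_sub_of_hasDerivWithinAt hs hf (hg hy) (hg hz)
  rw [hfg hy, hfg hz] at h
  rw [NNReal.coe_inv, ← div_eq_inv_mul, le_div_iff₀' (by positivity), Real.dist_eq, Real.dist_eq, h,
    abs_mul]
  gcongr
  exact hf' ξ hξ

theorem hasDerivWithinAt_of_rightInvOn {y c : ℝ} (hf : HasDerivWithinAt f c s (g y)) (hc : c ≠ 0)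
    (hy : y ∈ t) (hgc : ContinuousOn g t) (hg : MapsTo g t s) (hfg : RightInvOn g f t) :
    HasDerivWithinAt g c⁻¹ t y :=
  hasDerivWithinAt_iff_hasFDerivWithinAt.2 <|
    (HasFDerivWithinAt.of_local_left_inverse
      (f' := ContinuousLinearEquiv.unitsEquivAut ℝ (Units.mk0 c hc))
      ((hgc y hy).tendsto_nhdsWithin hg) hf.hasFDerivWithinAt hy
      (eventually_mem_nhdsWithin.mono fun _ hz => hfg hz))

theorem hasDistortionOn_of_rightInvOn {K : ℝ≥0} (ht : Convex ℝ t)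
    (hf : ∀ x ∈ s, HasDerivWithinAt f (f' x) s x) (hf' : ∀ x ∈ s, HasDerivWithinAt f' (f'' x) s x)
    (h0 : ∀ x ∈ s, f' x ≠ 0) (hK : ∀ x ∈ s, |f'' x| / f' x ^ 2 ≤ K)
    (hgc : ContinuousOn g t) (hg : MapsTo g t s) (hfg : RightInvOn g f t) :
    HasDistortionOn K g t := by
  have hg' (y : ℝ) (hy : y ∈ t) : HasDerivWithinAt g (f' (g y))⁻¹ t y :=
    hasDerivWithinAt_of_rightInvOn (hf _ (hg hy)) (h0 _ (hg hy)) hy hgc hg hfg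
  have hlog (y : ℝ) (hy : y ∈ t) : HasDerivWithinAt (fun y => Real.log (f' (g y)))
      (f'' (g y) * (f' (g y))⁻¹ / f' (g y)) t y :=
    ((hf' _ (hg hy)).comp y (hg' y hy) hg).log (h0 _ (hg hy))
  refine ⟨_, hg', fun y hy z hz => ?_⟩
  have hlip : Real.log (f' (g z)) - Real.log (f' (g y)) ≤ K * |y - z| := by
    rw [abs_sub_comm]
    refine (le_abs_self _).trans <|
      ht.norm_image_sub_le_of_norm_hasDerivWithin_le hlog (fun w hw => ?_) hy hz
    calc |f'' (g w) * (f' (g w))⁻¹ / f' (g w)| = |f'' (g w)| / f' (g w) ^ 2 := by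
          rw [← div_eq_mul_inv, div_div, ← sq, abs_div, abs_sq]
      _ ≤ K := hK _ (hg hw)
  rw [abs_inv, abs_inv, ← Real.exp_log_eq_abs (h0 _ (hg hy)),
    ← Real.exp_log_eq_abs (h0 _ (hg hz)), ← Real.exp_neg, ← Real.exp_neg, ← Real.exp_add,
    Real.exp_le_exp]
  linarith

theorem mapsTo_Ioo_of_mapsTo_Icc {a b c d : ℝ} (hc : ContinuousOn f (Icc a b))
    (hinj : InjOn f (Icc a b)) (hf : MapsTo f (Icc a b) (Icc c d)) :
    MapsTo f (Ioo a b) (Ioo c d) := by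
  intro x hx
  have hab : a ≤ b := (hx.1.trans hx.2).le
  have ha := left_mem_Icc.2 hab
  have hb := right_mem_Icc.2 hab
  have hxI := Ioo_subset_Icc_self hx
  rcases hc.strictMonoOn_of_injOn_Icc' hab hinj with hmono | hanti
  · exact ⟨(hf ha).1.trans_lt (hmono ha hxI hx.1), (hmono hxI hb hx.2).trans_le (hf hb).2⟩
  · exact ⟨(hf hb).1.trans_lt (hanti hxI hb hx.2), (hanti ha hxI hx.1).trans_le (hf ha).2⟩

theorem exists_mem_Ico_succ {a : ℕ → ℝ} {l x : ℝ} (ha : Tendsto a atTop (𝓝 l))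
    (hx : x ∈ Ico (a 0) l) : ∃ j, x ∈ Ico (a j) (a (j + 1)) := by
  classical
  have hex : ∃ n, x < a n := (ha.eventually_const_lt hx.2).exists
  obtain ⟨j, hj⟩ := Nat.exists_eq_succ_of_ne_zero
    (show Nat.find hex ≠ 0 from fun h => (h ▸ Nat.find_spec hex).not_ge hx.1)
  have hlt : x < a (j + 1) := (congrArg a hj).subst (Nat.find_spec hex)
  exact ⟨j, not_lt.1 (Nat.find_min hex (by omega)), hlt⟩

end InverseFunctions

/-- A full-branch interval map with at most one non-expanding branch, given by its inverse branches
`ψ i`, whose images of `(0, 1)` are disjoint since `T` inverts all of them and exhaust `[0, 1]` up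
to a null set. The branch `i₀` is the leftmost one and carries the possibly indifferent fixed point
`0`; the others contract by `ρ`. -/
structure IntermittentMap (ι : Type*) where
  T : ℝ → ℝ
  ψ : ι → ℝ → ℝ
  i₀ : ι
  ρ : ℝ≥0
  κ : ℝ≥0
  mapsTo_Ioo : ∀ i, MapsTo (ψ i) (Ioo 0 1) (Ioo 0 1)
  apply_ψ : ∀ i, ∀ y ∈ Ioo (0 : ℝ) 1, T (ψ i y) = y
  ae_mem_image : ∀ᵐ x : ℝ, x ∈ Icc (0 : ℝ) 1 → ∃ i, x ∈ ψ i '' Ioo 0 1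
  hasDistortionOn : ∀ i, HasDistortionOn κ (ψ i) (Icc 0 1)
  ρ_lt_one : ρ < 1
  lipschitzOnWith : ∀ i, i ≠ i₀ → LipschitzOnWith ρ (ψ i) (Icc 0 1)
  lipschitzOnWith_one : LipschitzOnWith 1 (ψ i₀) (Icc 0 1)
  monotoneOn : MonotoneOn (ψ i₀) (Icc 0 1)
  ψ_lt : ∀ y ∈ Ioc (0 : ℝ) 1, ψ i₀ y < y
  ψ_one_le : ∀ i, i ≠ i₀ → ∀ y ∈ Icc (0 : ℝ) 1, ψ i₀ 1 ≤ ψ i y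

namespace IntermittentMap

variable {ι : Type*} (S : IntermittentMap ι)

section Branches

theorem mapsTo_Icc (i : ι) : MapsTo (S.ψ i) (Icc 0 1) (Icc 0 1) := by
  simpa using (S.mapsTo_Ioo i).closure_of_continuousOn
    (by simpa using (S.hasDistortionOn i).differentiableOn.continuousOn)

/-- The inverse branch of an iterate of `T` along the word `w`; the first letter of `w` is the
branch in which the image lies, hence is applied last. -/
def branch (w : List ι) : ℝ → ℝ := w.foldr (fun i g => S.ψ i ∘ g) id

theorem branch_append (v w : List ι) : S.branch (v ++ w) = S.branch v ∘ S.branch w := by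
  induction v with
  | nil => rfl
  | cons i v ih => exact congrArg (S.ψ i ∘ ·) ih

theorem branch_replicate (n : ℕ) (i : ι) : S.branch (.replicate n i) = (S.ψ i)^[n] := by
  induction n with
  | zero => rfl
  | succ n ih => rw [Function.iterate_succ', ← ih]; rfl

theorem mapsTo_branch_Ioo (w : List ι) : MapsTo (S.branch w) (Ioo 0 1) (Ioo 0 1) := by
  induction w with
  | nil => exact mapsTo_id _
  | cons i w ih => exact (S.mapsTo_Ioo i).comp ih

theorem iterate_branch (w : List ι) {y : ℝ} (hy : y ∈ Ioo (0 : ℝ) 1) :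
    S.T^[w.length] (S.branch w y) = y := by
  induction w with
  | nil => rfl
  | cons i w ih =>
    rw [List.length_cons, Function.iterate_succ_apply]
    exact (congrArg _ (S.apply_ψ i _ (S.mapsTo_branch_Ioo w hy))).trans ih

theorem branch_zero_ne_branch_one {w : List ι} {D : ℝ≥0}
    (hw : HasDistortionOn D (S.branch w) (Icc 0 1)) : S.branch w 0 ≠ S.branch w 1 := by
  intro h
  have h13 : (1 / 3 : ℝ) ∈ Ioo (0 : ℝ) 1 := by norm_num
  have h23 : (2 / 3 : ℝ) ∈ Ioo (0 : ℝ) 1 := by norm_num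
  have heq : S.branch w (1 / 3) = S.branch w (2 / 3) := by
    simpa [h, sub_eq_zero] using
      hw.abs_sub_le_mul (Ioo_subset_Icc_self h13) (Ioo_subset_Icc_self h23)
  have := (S.iterate_branch w h13).symm.trans (heq ▸ S.iterate_branch w h23)
  norm_num at this

end Branches

section Regular

/-- The points of `[0, 1]` whose whole orbit stays in the interiors of the branch domains. -/
def regular : Set ℝ := {x | ∀ n, ∃ i, S.T^[n] x ∈ S.ψ i '' Ioo 0 1}

theorem regular_subset_Ioo : S.regular ⊆ Ioo 0 1 := fun x hx => by
  obtain ⟨i, hi⟩ := hx 0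
  exact (S.mapsTo_Ioo i).image_subset hi

theorem iterate_mem_regular {x : ℝ} (hx : x ∈ S.regular) (n : ℕ) : S.T^[n] x ∈ S.regular :=
  fun m => Function.iterate_add_apply S.T m n x ▸ hx (m + n)

theorem ae_comp_of_ae [Countable ι] {p : ℝ → Prop}
    (hp : ∀ᵐ y : ℝ, y ∈ Icc (0 : ℝ) 1 → p y) : ∀ᵐ x : ℝ, x ∈ Icc (0 : ℝ) 1 → p (S.T x) := by
  have hnull (i : ι) : volume (S.ψ i '' {y | y ∈ Icc (0 : ℝ) 1 ∧ ¬p y}) = 0 :=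
    addHaar_image_eq_zero_of_differentiableOn_of_addHaar_eq_zero volume
      ((S.hasDistortionOn i).differentiableOn.mono fun y hy => hy.1)
      (by simpa [ae_iff, and_assoc] using hp)
  filter_upwards [S.ae_mem_image, ae_all_iff.2 fun i => compl_mem_ae_iff.2 (hnull i)]
    with x hx hnot hxI
  obtain ⟨i, y, hy, rfl⟩ := hx hxI
  rw [S.apply_ψ i y hy]
  by_contra hpy
  exact hnot i ⟨y, ⟨Ioo_subset_Icc_self hy, hpy⟩, rfl⟩

theorem ae_mem_regular [Countable ι] : ∀ᵐ x : ℝ, x ∈ Icc (0 : ℝ) 1 → x ∈ S.regular := by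
  have h (n : ℕ) : ∀ᵐ x : ℝ, x ∈ Icc (0 : ℝ) 1 → ∃ i, S.T^[n] x ∈ S.ψ i '' Ioo 0 1 := by
    induction n with
    | zero => exact S.ae_mem_image
    | succ n ih => exact S.ae_comp_of_ae ih
  filter_upwards [ae_all_iff.2 h] with x hx hxI n using hx n hxI

theorem exists_first_passage {x : ℝ} (hx : x ∈ S.regular) :
    ∃ l i, i ≠ S.i₀ ∧ ∃ t ∈ S.regular, (S.ψ S.i₀)^[l] (S.ψ i t) = x := by
  classical
  have hescape : ∃ k, S.ψ S.i₀ (S.T^[k + 1] x) ≠ S.T^[k] x :=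
    exists_apply_ne_of_apply_lt (z := fun k => S.T^[k] x) (b := 1)
      ((S.hasDistortionOn S.i₀).differentiableOn.continuousOn.mono Ioc_subset_Icc_self) S.ψ_lt
      fun k => Ioo_subset_Ioc_self (S.regular_subset_Ioo (S.iterate_mem_regular hx k))
  set l := Nat.find hescape
  obtain ⟨i, y, hy, hyx⟩ := hx l
  have hyT : y = S.T^[l + 1] x := by
    rw [Function.iterate_succ_apply', ← hyx, S.apply_ψ i y hy]
  refine ⟨l, i, ?_, y, hyT ▸ S.iterate_mem_regular hx (l + 1), ?_⟩
  · rintro rfl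
    exact Nat.find_spec hescape (hyT ▸ hyx)
  · rw [hyx]
    exact iterate_eq_of_apply_succ_eq (z := fun k => S.T^[k] x)
      fun k hk => not_not.1 (Nat.find_min hescape hk)

end Regular

section Cylinders

theorem exists_hasDistortionOn_first_passage :
    ∃ D : ℝ≥0, ∀ l i, i ≠ S.i₀ → HasDistortionOn D ((S.ψ S.i₀)^[l] ∘ S.ψ i) (Icc 0 1) := by
  obtain ⟨D, hD⟩ := (S.hasDistortionOn S.i₀).exists_forall_iterate S.monotoneOn
    (S.mapsTo_Icc S.i₀) zero_le_one (S.ψ_lt 1 (by simp))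
  exact ⟨_, fun l i hi => (hD l).comp (S.hasDistortionOn i)
    (fun y hy => ⟨S.ψ_one_le i hi y hy, (S.mapsTo_Icc i hy).2⟩) (S.lipschitzOnWith i hi)⟩

theorem lipschitzOnWith_first_passage (l : ℕ) {i : ι} (hi : i ≠ S.i₀) :
    LipschitzOnWith S.ρ ((S.ψ S.i₀)^[l] ∘ S.ψ i) (Icc 0 1) := by
  induction l with
  | zero => exact S.lipschitzOnWith i hi
  | succ l ih =>
    rw [Function.iterate_succ', Function.comp_assoc, ← one_mul S.ρ]
    exact S.lipschitzOnWith_one.comp ih (((S.mapsTo_Icc _).iterate l).comp (S.mapsTo_Icc i))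

/- Prepending a branch of distortion `D` to a first-passage branch, which contracts by `ρ` and has
distortion `D₀`, gives distortion `D * ρ + D₀`, and `D₀ / (1 - ρ)` is the fixed point of this. -/
theorem exists_branch_of_mem_regular : ∃ D : ℝ≥0, ∀ m, ∀ x ∈ S.regular, ∃ w, ∃ t ∈ S.regular,
    S.branch w t = x ∧ LipschitzOnWith (S.ρ ^ m) (S.branch w) (Icc 0 1) ∧
      HasDistortionOn D (S.branch w) (Icc 0 1) := by
  obtain ⟨D₀, hD₀⟩ := S.exists_hasDistortionOn_first_passage
  have hD : D₀ / (1 - S.ρ) * S.ρ + D₀ = D₀ / (1 - S.ρ) := by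
    nth_rw 2 [← div_mul_cancel₀ D₀ (tsub_pos_of_lt S.ρ_lt_one).ne']
    rw [← mul_add, add_tsub_cancel_of_le S.ρ_lt_one.le, mul_one]
  refine ⟨D₀ / (1 - S.ρ), fun m x hx => ?_⟩
  induction m with
  | zero => exact ⟨[], x, hx, rfl, pow_zero S.ρ ▸ LipschitzWith.id.lipschitzOnWith, .id⟩
  | succ m ih =>
    obtain ⟨w, t, ht, rfl, hlip, hdist⟩ := ih
    obtain ⟨l, i, hi, u, hu, rfl⟩ := S.exists_first_passage ht
    have hmaps := ((S.mapsTo_Icc S.i₀).iterate l).comp (S.mapsTo_Icc i)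
    have hlip' := S.lipschitzOnWith_first_passage l hi
    have hw : S.branch (w ++ (.replicate l S.i₀ ++ [i])) =
        S.branch w ∘ ((S.ψ S.i₀)^[l] ∘ S.ψ i) := by
      rw [branch_append, branch_append, branch_replicate]; rfl
    refine ⟨_, u, hu, congrFun hw u, hw ▸ ?_, hw ▸ ?_⟩
    · rw [pow_succ]
      exact hlip.comp hlip' hmaps
    · rw [← hD]
      exact hdist.comp (hD₀ l i hi) hmaps hlip'

end Cylinders

section Tail

theorem exists_tendsto_volume_diff_branch {E : Set ℝ} {x : ℝ} (hx : x ∈ S.regular)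
    (hE : MeasurableSet E)
    (hdens : Tendsto
      (fun δ => volume (E ∩ Metric.closedBall x δ) / volume (Metric.closedBall x δ))
      (𝓝[>] 0) (𝓝 1)) :
    ∃ w : ℕ → List ι,
      Tendsto (fun m => volume (Icc 0 1 \ S.branch (w m) ⁻¹' E)) atTop (𝓝 0) := by
  obtain ⟨D, hD⟩ := S.exists_branch_of_mem_regular
  choose w t ht htx hlip hdist using fun m => hD m x hx
  have hne (m : ℕ) : 0 < |S.branch (w m) 0 - S.branch (w m) 1| :=
    abs_pos.2 (sub_ne_zero.2 (S.branch_zero_ne_branch_one (hdist m)))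
  refine ⟨w, tendsto_volume_diff_preimage_zero (C := (Real.exp D * Real.exp D).toNNReal)
    (L := fun m => Real.exp D * |S.branch (w m) 0 - S.branch (w m) 1|) hE hdens
    (fun m => mul_pos (Real.exp_pos _) (hne m)) ?_ (fun m y hy => ?_) fun m y hy z hz => ?_⟩
  · have hρ : Tendsto (fun m => Real.exp D * S.ρ ^ m) atTop (𝓝 0) := by
      simpa using (tendsto_pow_atTop_nhds_zero_of_lt_one S.ρ.2 S.ρ_lt_one).const_mul (Real.exp D)
    refine squeeze_zero (fun m => by positivity) (fun m => ?_) hρ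
    gcongr
    simpa [Real.dist_eq] using (hlip m).dist_le_mul 0 unitInterval.zero_mem 1 unitInterval.one_mem
  · have htI := Ioo_subset_Icc_self (S.regular_subset_Ioo (ht m))
    rw [Metric.mem_closedBall, ← htx m]
    refine ((hdist m).abs_sub_le_mul hy htI).trans ?_
    exact mul_le_of_le_one_right (by positivity) (Real.dist_le_of_mem_Icc_01 hy htI)
  · have := (hdist m).mul_abs_sub_le hy hz
    rw [Real.coe_toNNReal _ (by positivity), mul_assoc, mul_assoc]
    gcongr

/-- The sequences `B` for which `T⁻¹ (B (n + 1)) = B n` up to null sets, phrased through inverse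
branches; the sets `B n` with `T⁻ⁿ (B n) = A` for a tail set `A` form such a sequence. -/
def IsTailSequence (B : ℕ → Set ℝ) : Prop :=
  ∀ n i, ∀ y ∈ Ioo (0 : ℝ) 1, S.ψ i y ∈ B n ↔ y ∈ B (n + 1)

namespace IsTailSequence

variable {S} {B C : ℕ → Set ℝ}

theorem compl (hB : S.IsTailSequence B) : S.IsTailSequence fun n => (B n)ᶜ :=
  fun n i y hy => not_congr (hB n i y hy)

theorem sdiff (hB : S.IsTailSequence B) (hC : S.IsTailSequence C) :
    S.IsTailSequence fun n => B n \ C n :=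
  fun n i y hy => and_congr (hB n i y hy) (not_congr (hC n i y hy))

theorem comp_add_left (hB : S.IsTailSequence B) (k : ℕ) : S.IsTailSequence fun n => B (k + n) :=
  fun n => hB (k + n)

theorem branch_mem_iff (hB : S.IsTailSequence B) (n : ℕ) (w : List ι) {y : ℝ}
    (hy : y ∈ Ioo (0 : ℝ) 1) : S.branch w y ∈ B n ↔ y ∈ B (n + w.length) := by
  induction w generalizing n with
  | nil => rfl
  | cons i w ih =>
    refine (hB n i _ (S.mapsTo_branch_Ioo w hy)).trans ((ih (n + 1)).trans ?_)
    rw [List.length_cons, add_right_comm, add_assoc]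

theorem volume_diff_eq (hB : S.IsTailSequence B) (n : ℕ) (w : List ι) :
    volume (Icc 0 1 \ S.branch w ⁻¹' B n) = volume (Icc 0 1 \ B (n + w.length)) := by
  have hIoo (E : Set ℝ) : volume (Icc 0 1 \ E) = volume (Ioo 0 1 \ E) :=
    measure_congr (ae_eq_set_sdiff Ioo_ae_eq_Icc.symm (ae_eq_refl E))
  rw [hIoo, hIoo]
  congr 1
  ext y
  exact and_congr_right fun hy => not_congr (hB.branch_mem_iff n w hy)

theorem exists_volume_diff_lt [Countable ι] (hB : S.IsTailSequence B) (hm : MeasurableSet (B 0))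
    (h0 : volume (Icc 0 1 ∩ B 0) ≠ 0) {ε : ℝ≥0∞} (hε : ε ≠ 0) :
    ∃ n, volume (Icc 0 1 \ B n) < ε := by
  obtain ⟨x, ⟨hxI, -⟩, hreg, hdens⟩ := Measure.exists_mem_of_measure_ne_zero_of_ae h0
    ((ae_restrict_of_ae S.ae_mem_regular).and
      (ae_restrict_of_ae_restrict_of_subset inter_subset_right
        (Besicovitch.ae_tendsto_measure_inter_div volume (B 0))))
  obtain ⟨w, hw⟩ := S.exists_tendsto_volume_diff_branch (hreg hxI) hm hdens
  obtain ⟨m, hlt⟩ := (hw.eventually_lt_const (pos_iff_ne_zero.2 hε)).exists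
  exact ⟨_, hB.volume_diff_eq 0 (w m) ▸ hlt⟩

variable (S) in
theorem exists_volume_diff_succ_le : ∃ M : ℝ≥0, ∀ B, S.IsTailSequence B →
    ∀ n, volume (Icc 0 1 \ B (n + 1)) ≤ M * volume (Icc 0 1 \ B n) := by
  obtain ⟨M, hM⟩ := (S.hasDistortionOn S.i₀).exists_abs_sub_le_mul
    (S.branch_zero_ne_branch_one (w := [S.i₀]) (S.hasDistortionOn S.i₀))
  refine ⟨M, fun B hB n => ?_⟩
  calc volume (Icc 0 1 \ B (n + 1))
      = volume (Icc 0 1 \ S.ψ S.i₀ ⁻¹' B n) := (hB.volume_diff_eq n [S.i₀]).symm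
    _ ≤ M * volume (S.ψ S.i₀ '' (Icc 0 1 \ S.ψ S.i₀ ⁻¹' B n)) :=
        volume_le_mul_volume_image fun x hx y hy => hM x hx.1 y hy.1
    _ ≤ M * volume (Icc 0 1 \ B n) := by
        gcongr
        exact image_subset_iff.2 fun y hy => ⟨S.mapsTo_Icc S.i₀ hy.1, hy.2⟩

theorem volume_inter_diff_succ [Countable ι] (hB : S.IsTailSequence B)
    (hm : ∀ n, MeasurableSet (B n)) (k : ℕ) : volume (Icc 0 1 ∩ (B k \ B (k + 1))) = 0 := by
  by_contra h0
  obtain ⟨M, hM⟩ := exists_volume_diff_succ_le S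
  have hD : S.IsTailSequence fun n => B (k + n) \ B (k + 1 + n) :=
    (hB.comp_add_left k).sdiff (hB.comp_add_left (k + 1))
  obtain ⟨n, hn⟩ := hD.exists_volume_diff_lt ((hm k).diff (hm (k + 1))) h0
    (ε := (1 + M : ℝ≥0∞)⁻¹) (by simp)
  set E := B (k + n) \ B (k + 1 + n)
  refine lt_irrefl (1 : ℝ≥0∞) ?_
  calc (1 : ℝ≥0∞) = volume (Icc (0 : ℝ) 1) := by simp
    _ ≤ volume (Icc 0 1 \ E) + volume (Icc 0 1 \ B (k + n + 1)) := by
        refine (measure_mono fun x hx => ?_).trans (measure_union_le _ _)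
        by_cases hxE : x ∈ E
        · exact Or.inr ⟨hx, add_right_comm k n 1 ▸ hxE.2⟩
        · exact Or.inl ⟨hx, hxE⟩
    _ ≤ volume (Icc 0 1 \ E) + M * volume (Icc 0 1 \ E) := by
        gcongr
        exact (hM B hB (k + n)).trans (by gcongr; exact sdiff_subset)
    _ = (1 + M : ℝ≥0∞) * volume (Icc 0 1 \ E) := by rw [add_mul, one_mul]
    _ < (1 + M : ℝ≥0∞) * (1 + M : ℝ≥0∞)⁻¹ :=
        ENNReal.mul_lt_mul_right (by simp) (by finiteness) hn
    _ = 1 := ENNReal.mul_inv_cancel (by simp) (by finiteness)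

theorem volume_diff_zero_le [Countable ι] (hB : S.IsTailSequence B)
    (hm : ∀ n, MeasurableSet (B n)) (n : ℕ) :
    volume (Icc 0 1 \ B 0) ≤ volume (Icc 0 1 \ B n) := by
  induction n with
  | zero => rfl
  | succ n ih =>
    refine ih.trans ?_
    have h := hB.compl.volume_inter_diff_succ (fun n => (hm n).compl) n
    calc volume (Icc 0 1 \ B n)
        ≤ volume (Icc 0 1 \ B (n + 1) ∪ Icc 0 1 ∩ ((B n)ᶜ \ (B (n + 1))ᶜ)) := by
          refine measure_mono fun x hx => ?_
          by_cases hxB : x ∈ B (n + 1)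
          · exact Or.inr ⟨hx.1, hx.2, not_not.2 hxB⟩
          · exact Or.inl ⟨hx.1, hxB⟩
      _ ≤ volume (Icc 0 1 \ B (n + 1)) := (measure_union_le _ _).trans (by rw [h, add_zero])

theorem volume_eq_zero_or [Countable ι] (hB : S.IsTailSequence B)
    (hm : ∀ n, MeasurableSet (B n)) :
    volume (Icc 0 1 ∩ B 0) = 0 ∨ volume (Icc 0 1 \ B 0) = 0 := by
  by_contra! h
  obtain ⟨n, hn⟩ := hB.exists_volume_diff_lt (hm 0) h.1 h.2
  exact hn.not_ge (hB.volume_diff_zero_le hm n)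

end IsTailSequence

theorem isTailSequence_of_forall_eq_inter_preimage {A : Set ℝ} {B : ℕ → Set ℝ}
    (hA : ∀ n, A = Icc 0 1 ∩ S.T^[n] ⁻¹' B n) : S.IsTailSequence B := by
  intro n i y hy
  -- Both sides say that `z`, which reaches `ψ i y` after `n` steps, lies in `A`.
  let z := S.branch (.replicate n S.i₀) (S.ψ i y)
  have hψy : S.ψ i y ∈ Ioo 0 1 := S.mapsTo_Ioo i hy
  have hz : z ∈ Icc 0 1 := Ioo_subset_Icc_self (S.mapsTo_branch_Ioo _ hψy)
  have hzn : S.T^[n] z = S.ψ i y := by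
    simpa using S.iterate_branch (.replicate n S.i₀) hψy
  have hzn' : S.T^[n + 1] z = y := by
    rw [Function.iterate_succ_apply', hzn, S.apply_ψ i y hy]
  calc S.ψ i y ∈ B n ↔ z ∈ A := by rw [hA n, ← hzn]; exact (and_iff_right hz).symm
    _ ↔ y ∈ B (n + 1) := by rw [hA (n + 1), ← hzn']; exact and_iff_right hz

end Tail

end IntermittentMap

theorem exact_of_intervalMapSetup_general {ι : Type*} [Countable ι] (S : IntermittentMap ι)
    {A : Set ℝ} (hA : ∀ n, ∃ B, MeasurableSet B ∧ A = Icc 0 1 ∩ S.T^[n] ⁻¹' B) :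
    volume A = 0 ∨ volume (Icc 0 1 \ A) = 0 := by
  choose B hm hAB using hA
  have h := (S.isTailSequence_of_forall_eq_inter_preimage hAB).volume_eq_zero_or hm
  rwa [hAB 0, Function.iterate_zero, preimage_id, sdiff_self_inter]

namespace IntervalMapSetup

variable (S : IntervalMapSetup)

/-- The inverse `[0,1] → [a_j, a_{j+1}]` of the branch `φ j`. -/
noncomputable def inverseBranch (j : ℕ) : ℝ → ℝ :=
  Function.invFunOn (S.φ j) (Icc (S.a j) (S.a (j + 1)))

theorem mapsTo_inverseBranch (j : ℕ) :
    MapsTo (S.inverseBranch j) (Icc 0 1) (Icc (S.a j) (S.a (j + 1))) :=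
  (S.hφ_bij j).surjOn.mapsTo_invFunOn

theorem rightInvOn_inverseBranch (j : ℕ) : RightInvOn (S.inverseBranch j) (S.φ j) (Icc 0 1) :=
  (S.hφ_bij j).surjOn.rightInvOn_invFunOn

theorem leftInvOn_inverseBranch (j : ℕ) :
    LeftInvOn (S.inverseBranch j) (S.φ j) (Icc (S.a j) (S.a (j + 1))) :=
  (S.hφ_bij j).injOn.leftInvOn_invFunOn

theorem a_nonneg (j : ℕ) : 0 ≤ S.a j := S.ha0 ▸ S.ha_mono.monotone j.zero_le

theorem one_le_φd_zero {x : ℝ} (hx : x ∈ Icc (S.a 0) (S.a 1)) : 1 ≤ S.φd 0 x := by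
  rcases hx.1.eq_or_lt with rfl | h
  · rw [S.ha0, S.hA4_d1]
  · exact (S.hA4_exp x (S.ha0 ▸ h) hx.2).le

theorem one_le_abs_φd (j : ℕ) {x : ℝ} (hx : x ∈ Icc (S.a j) (S.a (j + 1))) : 1 ≤ |S.φd j x| := by
  rcases j.eq_zero_or_pos with rfl | hj
  · exact (S.one_le_φd_zero hx).trans (le_abs_self _)
  · exact S.hΛ.le.trans (S.hA2 j hj x hx)

theorem lipschitzOnWith_one_inverseBranch (j : ℕ) :
    LipschitzOnWith 1 (S.inverseBranch j) (Icc 0 1) := by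
  simpa using lipschitzOnWith_of_rightInvOn (convex_Icc _ _) one_ne_zero (S.hφ_d j)
    (fun x hx => by simpa using S.one_le_abs_φd j hx) (S.mapsTo_inverseBranch j)
    (S.rightInvOn_inverseBranch j)

theorem lipschitzOnWith_inverseBranch {j : ℕ} (hj : 1 ≤ j) :
    LipschitzOnWith S.Λ.toNNReal⁻¹ (S.inverseBranch j) (Icc 0 1) := by
  have hΛ : 0 < S.Λ := zero_lt_one.trans S.hΛ
  exact lipschitzOnWith_of_rightInvOn (convex_Icc _ _) (Real.toNNReal_pos.2 hΛ).ne' (S.hφ_d j)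
    (fun x hx => by simpa [hΛ.le] using S.hA2 j hj x hx) (S.mapsTo_inverseBranch j)
    (S.rightInvOn_inverseBranch j)

theorem hasDistortionOn_inverseBranch (j : ℕ) :
    HasDistortionOn S.K.toNNReal (S.inverseBranch j) (Icc 0 1) :=
  hasDistortionOn_of_rightInvOn (convex_Icc 0 1) (S.hφ_d j) (S.hφ_dd j)
    (fun _ hx => abs_pos.1 (zero_lt_one.trans_le (S.one_le_abs_φd j hx)))
    (fun x hx => (S.hA3 j x hx).trans (Real.le_coe_toNNReal _))
    (S.lipschitzOnWith_one_inverseBranch j).continuousOn (S.mapsTo_inverseBranch j)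
    (S.rightInvOn_inverseBranch j)

theorem mapsTo_inverseBranch_Ioo (j : ℕ) :
    MapsTo (S.inverseBranch j) (Ioo 0 1) (Ioo (S.a j) (S.a (j + 1))) :=
  mapsTo_Ioo_of_mapsTo_Icc (S.lipschitzOnWith_one_inverseBranch j).continuousOn
    (S.rightInvOn_inverseBranch j).injOn (S.mapsTo_inverseBranch j)

theorem strictMonoOn_φ_zero : StrictMonoOn (S.φ 0) (Icc (S.a 0) (S.a 1)) := by
  intro x hx y hy hxy
  obtain ⟨ξ, hξ, h⟩ :=
    exists_sub_eq_mul_sub_of_hasDerivWithinAt (convex_Icc _ _) (S.hφ_d 0) hy hx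
  exact sub_pos.1 (h ▸ mul_pos (zero_lt_one.trans_le (S.one_le_φd_zero hξ)) (sub_pos.2 hxy))

theorem lt_φ_zero {x : ℝ} (hx : x ∈ Ioc (S.a 0) (S.a 1)) : x < S.φ 0 x := by
  obtain ⟨ξ, hξ, h⟩ := exists_hasDerivAt_eq_slope (S.φ 0) (S.φd 0) hx.1
    (fun z hz => (S.hφ_d 0 z ⟨hz.1, hz.2.trans hx.2⟩).continuousWithinAt.mono
      (Icc_subset_Icc_right hx.2))
    fun z hz => (S.hφ_d 0 z ⟨hz.1.le, hz.2.le.trans hx.2⟩).hasDerivAt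
      (Icc_mem_nhds hz.1 (hz.2.trans_le hx.2))
  rw [S.ha0] at hx hξ h
  rw [S.hA4_fix, sub_zero, sub_zero, eq_div_iff hx.1.ne'] at h
  rw [← h]
  exact lt_mul_of_one_lt_left hx.1 (S.hA4_exp ξ hξ.1 (hξ.2.le.trans hx.2))

theorem monotoneOn_inverseBranch_zero : MonotoneOn (S.inverseBranch 0) (Icc 0 1) := by
  intro x hx y hy hxy
  rwa [← S.strictMonoOn_φ_zero.le_iff_le (S.mapsTo_inverseBranch 0 hx)
    (S.mapsTo_inverseBranch 0 hy), S.rightInvOn_inverseBranch 0 hx,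
    S.rightInvOn_inverseBranch 0 hy]

theorem inverseBranch_zero_lt {y : ℝ} (hy : y ∈ Ioc (0 : ℝ) 1) : S.inverseBranch 0 y < y := by
  have hyI := Ioc_subset_Icc_self hy
  have hmem := S.mapsTo_inverseBranch 0 hyI
  have hφ : S.φ 0 (S.inverseBranch 0 y) = y := S.rightInvOn_inverseBranch 0 hyI
  have hne : S.a 0 ≠ S.inverseBranch 0 y := fun h => by
    rw [← h, S.ha0, S.hA4_fix] at hφ
    exact hy.1.ne hφ
  exact (S.lt_φ_zero ⟨hmem.1.lt_of_ne hne, hmem.2⟩).trans_eq hφ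

theorem ae_mem_image_inverseBranch :
    ∀ᵐ x : ℝ, x ∈ Icc (0 : ℝ) 1 → ∃ j, x ∈ S.inverseBranch j '' Ioo 0 1 := by
  have hcount : (insert 1 (⋃ j, S.inverseBranch j '' {0, 1}) : Set ℝ).Countable :=
    (countable_iUnion fun j => (toFinite _).countable).insert 1
  filter_upwards [hcount.ae_notMem volume] with x hx hxI
  rw [mem_insert_iff, mem_iUnion, not_or, not_exists] at hx
  obtain ⟨j, hj⟩ := exists_mem_Ico_succ S.ha_lim ⟨S.ha0 ▸ hxI.1, hxI.2.lt_of_ne hx.1⟩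
  have hjI := Ico_subset_Icc_self hj
  have hinv := S.leftInvOn_inverseBranch j hjI
  refine ⟨j, S.φ j x, ?_, hinv⟩
  rw [← Icc_sdiff_both]
  exact ⟨(S.hφ_bij j).mapsTo hjI, fun h => hx.2 j ⟨_, h, hinv⟩⟩

/-- `S` in terms of its inverse branches, with `i₀ = 0` and contraction factor `Λ⁻¹`. -/
noncomputable def toIntermittentMap : IntermittentMap ℕ where
  T := S.T
  ψ := S.inverseBranch
  i₀ := 0
  ρ := S.Λ.toNNReal⁻¹
  κ := S.K.toNNReal
  mapsTo_Ioo j := (S.mapsTo_inverseBranch_Ioo j).mono_right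
    (Ioo_subset_Ioo (S.a_nonneg j) (S.ha_lt (j + 1)).le)
  apply_ψ j _ hy := (S.hT_eq j _ (S.mapsTo_inverseBranch_Ioo j hy)).trans
    (S.rightInvOn_inverseBranch j (Ioo_subset_Icc_self hy))
  ae_mem_image := S.ae_mem_image_inverseBranch
  hasDistortionOn := S.hasDistortionOn_inverseBranch
  ρ_lt_one := inv_lt_one_of_one_lt₀ (Real.one_lt_toNNReal.2 S.hΛ)
  lipschitzOnWith _ hj := S.lipschitzOnWith_inverseBranch (Nat.one_le_iff_ne_zero.2 hj)
  lipschitzOnWith_one := S.lipschitzOnWith_one_inverseBranch 0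
  monotoneOn := S.monotoneOn_inverseBranch_zero
  ψ_lt _ := S.inverseBranch_zero_lt
  ψ_one_le j hj _ hy := (S.mapsTo_inverseBranch 0 (right_mem_Icc.2 zero_le_one)).2.trans <|
    (S.ha_mono.monotone (Nat.one_le_iff_ne_zero.2 hj)).trans (S.mapsTo_inverseBranch j hy).1

end IntervalMapSetup

/-- a Markov interval map satisfying (A1)–(A4) is exact w.r.t. Lebesgue
measure: every Borel subset of `[0,1]` belonging to the tail σ-algebra
`⋂ₙ T⁻ⁿ 𝓑([0,1])` is trivial mod Lebesgue. -/
theorem exact_of_intervalMapSetup (S : IntervalMapSetup) :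
    ∀ A : Set ℝ, A ⊆ Set.Icc 0 1 → MeasurableSet A →
      (∀ n : ℕ, ∃ B : Set ℝ, B ⊆ Set.Icc 0 1 ∧ MeasurableSet B ∧
        A = Set.Icc 0 1 ∩ S.T^[n] ⁻¹' B) →
      volume A = 0 ∨ volume (Set.Icc 0 1 \ A) = 0 := by
  intro A _ _ hA
  exact exact_of_intervalMapSetup_general S.toIntermittentMap fun n =>
    let ⟨B, _, hB, hAB⟩ := hA n
    ⟨B, hB, hAB⟩
end

section
/- Let (X, 𝒜, ν, T) be a non-singular dynamical system on a σ-finite measure space, with invariant σ-algebra ℐ and tail σ-algebra 𝒯. If ℐ = 𝒯 (mod ν), then every A ∈ 𝒜 with ν(A) > 0 is asymptotically intersecting. -/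
open MeasureTheory Set Filter

/-- `A` belongs to the tail σ-algebra `𝒯 = ⋂ₙ T⁻ⁿ 𝒜`: for every `n`, `A` is the
`n`-fold preimage of some measurable set. -/
def IsTailSet {X : Type*} [MeasurableSpace X] (T : X → X) (A : Set X) : Prop :=
  ∀ n : ℕ, ∃ B : Set X, MeasurableSet B ∧ A = T^[n] ⁻¹' B

/-- `A` belongs to the invariant σ-algebra `ℐ`: `A` is measurable and
`T⁻¹ A = A` mod `ν`. -/
def IsInvModNu {X : Type*} [MeasurableSpace X] (ν : Measure X) (T : X → X)
    (A : Set X) : Prop :=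
  MeasurableSet A ∧ ν (symmDiff (T ⁻¹' A) A) = 0

/-! The tail hull `H = ⋃ n, T⁻ⁿ (Tⁿ A)` is a tail set containing `A`. If `H` is invariant mod `ν`,
then almost every `x ∈ A` satisfies `T x ∈ H`, that is, `Tⁿ⁺¹ x ∈ Tⁿ A` for some `n`. Hence `A` is
covered mod `ν` by the sets `T⁻⁽ⁿ⁺¹⁾ (Tⁿ⁺¹ A ∩ Tⁿ A)`, and by non-singularity these cannot all come
from null intersections when `ν A > 0`. -/

section TailHull

variable {X : Type*} {T : X → X} {A : Set X}

/-- The tail hull of `A`: the points whose forward orbit merges, at some common time, with that of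
a point of `A`. It is the smallest set containing `A` that is an `n`-fold preimage for every `n`. -/
def tailHull (T : X → X) (A : Set X) : Set X :=
  ⋃ n : ℕ, T^[n] ⁻¹' (T^[n] '' A)

theorem mem_tailHull {x : X} : x ∈ tailHull T A ↔ ∃ n : ℕ, T^[n] x ∈ T^[n] '' A := by
  simp only [tailHull, mem_iUnion, mem_preimage]

theorem subset_tailHull (T : X → X) (A : Set X) : A ⊆ tailHull T A :=
  fun _ hx ↦ mem_tailHull.2 ⟨0, mem_image_of_mem _ hx⟩

theorem preimage_iterate_tailHull_image_iterate (T : X → X) (A : Set X) (m : ℕ) :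
    T^[m] ⁻¹' tailHull T (T^[m] '' A) = tailHull T A := by
  ext x
  rw [mem_preimage, mem_tailHull, mem_tailHull]
  constructor
  · rintro ⟨n, hn⟩
    refine ⟨n + m, ?_⟩
    rwa [Function.iterate_add, image_comp]
  · rintro ⟨n, hn⟩
    refine ⟨n, ?_⟩
    rw [← image_comp, ← Function.iterate_add, ← Function.iterate_add_apply, Nat.add_comm,
      Function.iterate_add, image_comp]
    exact mem_image_of_mem _ hn

theorem inter_preimage_tailHull_subset (T : X → X) (A : Set X) :
    A ∩ T ⁻¹' tailHull T A ⊆ ⋃ n : ℕ, T^[n + 1] ⁻¹' (T^[n + 1] '' A ∩ T^[n] '' A) := by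
  rintro x ⟨hxA, hTx⟩
  obtain ⟨n, hn⟩ := mem_tailHull.1 hTx
  exact mem_iUnion.2 ⟨n, mem_image_of_mem _ hxA, hn⟩

variable [MeasurableSpace X]

theorem measurableSet_image_iterate (hTimg : ∀ B : Set X, MeasurableSet B → MeasurableSet (T '' B))
    (hA : MeasurableSet A) (n : ℕ) : MeasurableSet (T^[n] '' A) := by
  rw [image_iterate_eq]
  exact MapsTo.iterate (s := {B | MeasurableSet B}) hTimg n hA

theorem measurableSet_tailHull (hT : Measurable T)
    (hTimg : ∀ B : Set X, MeasurableSet B → MeasurableSet (T '' B)) (hA : MeasurableSet A) :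
    MeasurableSet (tailHull T A) :=
  .iUnion fun n ↦ hT.iterate n (measurableSet_image_iterate hTimg hA n)

theorem isTailSet_tailHull (hT : Measurable T)
    (hTimg : ∀ B : Set X, MeasurableSet B → MeasurableSet (T '' B)) (hA : MeasurableSet A) :
    IsTailSet T (tailHull T A) :=
  fun m ↦ ⟨tailHull T (T^[m] '' A),
    measurableSet_tailHull hT hTimg (measurableSet_image_iterate hTimg hA m),
    (preimage_iterate_tailHull_image_iterate T A m).symm⟩

end TailHull

section AsymptoticallyIntersecting

variable {X : Type*} [MeasurableSpace X] {ν : Measure X} {T : X → X} {A : Set X}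

/-- Asymptotic intersection of `A`: two consecutive forward images of `A` overlap in a set of
positive measure. The standing assumptions that `A` is measurable with `0 < ν A` are not part of
the predicate. -/
def IsAsymptoticallyIntersecting (ν : Measure X) (T : X → X) (A : Set X) : Prop :=
  ∃ n : ℕ, 0 < ν (T^[n + 1] '' A ∩ T^[n] '' A)

theorem measure_inter_preimage_tailHull_eq_zero (hT : Measure.QuasiMeasurePreserving T ν ν)
    (hA : ¬ IsAsymptoticallyIntersecting ν T A) : ν (A ∩ T ⁻¹' tailHull T A) = 0 := by
  have hnull (n : ℕ) : ν (T^[n + 1] '' A ∩ T^[n] '' A) = 0 :=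
    nonpos_iff_eq_zero.1 (not_lt.1 (not_exists.1 hA n))
  exact measure_mono_null (inter_preimage_tailHull_subset T A)
    (measure_iUnion_null fun n ↦ (hT.iterate (n + 1)).preimage_null (hnull n))

theorem isAsymptoticallyIntersecting_of_measure_sdiff_preimage_tailHull_eq_zero
    (hT : Measure.QuasiMeasurePreserving T ν ν) (hsdiff : ν (A \ T ⁻¹' tailHull T A) = 0)
    (hpos : 0 < ν A) : IsAsymptoticallyIntersecting ν T A := by
  by_contra hA
  have hinter := measure_inter_preimage_tailHull_eq_zero hT hA
  refine hpos.ne' ?_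
  rw [← inter_union_sdiff A (T ⁻¹' tailHull T A)]
  exact measure_union_null hinter hsdiff

theorem asymptotically_intersecting_of_inv_eq_tail_general
    (hT : Measure.QuasiMeasurePreserving T ν ν)
    (hTimg : ∀ B : Set X, MeasurableSet B → MeasurableSet (T '' B))
    (htail : ∀ B : Set X, IsTailSet T B → ν (symmDiff (T ⁻¹' B) B) = 0)
    (hA : MeasurableSet A) (hpos : 0 < ν A) : IsAsymptoticallyIntersecting ν T A := by
  have hinv : ν (symmDiff (T ⁻¹' tailHull T A) (tailHull T A)) = 0 :=
    htail _ (isTailSet_tailHull hT.measurable hTimg hA)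
  have hsdiff : A \ T ⁻¹' tailHull T A ⊆ symmDiff (T ⁻¹' tailHull T A) (tailHull T A) :=
    (sdiff_subset_sdiff_left (subset_tailHull T A)).trans subset_union_right
  exact isAsymptoticallyIntersecting_of_measure_sdiff_preimage_tailHull_eq_zero hT
    (measure_mono_null hsdiff hinv) hpos

end AsymptoticallyIntersecting

/-- if the invariant and tail σ-algebras coincide mod `ν`, then every
measurable set of positive measure is asymptotically intersecting. -/
theorem asymptotically_intersecting_of_inv_eq_tail
    {X : Type*} [MeasurableSpace X] (ν : Measure X) [SigmaFinite ν] (T : X → X)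
    (hTmeas : Measurable T)
    (hTimg : ∀ A : Set X, MeasurableSet A → MeasurableSet (T '' A))
    (hTsurj : Function.Surjective T)
    (hns : ∀ A : Set X, MeasurableSet A → ν A = 0 → ν (T ⁻¹' A) = 0)
    (heq₁ : ∀ A : Set X, IsTailSet T A → ν (symmDiff (T ⁻¹' A) A) = 0)
    (heq₂ : ∀ A : Set X, IsInvModNu ν T A →
      ∃ B : Set X, IsTailSet T B ∧ ν (symmDiff A B) = 0) :
    ∀ A : Set X, MeasurableSet A → 0 < ν A →
      ∃ n : ℕ, 0 < ν (T^[n + 1] '' A ∩ T^[n] '' A) := by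
  have hT : Measure.QuasiMeasurePreserving T ν ν := ⟨hTmeas, .mk fun A hA h0 ↦ by
    rw [Measure.map_apply hTmeas hA, hns A hA h0]⟩
  exact fun A ↦ asymptotically_intersecting_of_inv_eq_tail_general hT hTimg heq₁
end
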